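/- Let 𝒴 be a convex cone with ℝ^N_0 ⊆ 𝒴 ⊆ L^0(Ω,𝐅_T,P) such that K^𝒴 is closed under componentwise P-a.s. convergence of sequences. If there exists a probability measure P' equivalent to P such that Y^i ∈ L^1(P') for every Y ∈ 𝒴 and every i, then NCA(𝒴) holds if and only if ℳ_e(𝒴) ≠ ∅. -/

import Mathlib

/-! If `NCA(𝒴)` holds, then `K^𝒴` is a closed convex cone of `N`-tuples which contains `-L⁰₊` and
meets `L⁰₊` only in `0`. An `N`-tuple of random variables is a single random variable on the
disjoint union of the spaces `(Ω, ℱⁱ_T)`, so the Kreps–Yan theorem applies to tuples: separating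
`K^𝒴 ∩ L¹` from indicators and exhausting yields strictly positive prices `ν¹, …, νᴺ` with
`∑ i, ∫ fⁱ dνⁱ ≤ 0` on `K^𝒴 ∩ L¹`. Here `L¹` is taken for a measure `μ ≤ P'`, equivalent to `P'`,
under which the asset prices are integrable; bounded densities keep the exchanges integrable.
Zero-sum exchanges of cash force the `νⁱ` to have the same mass, so they can be normalized by a
common factor, and the linearity of `K_i` turns the inequality into the martingale property.

Conversely, if `k + y ≥ 0`, then each `kⁱ` is bounded from below by `-yⁱ`, which is integrable under
the martingale measure `Qⁱ`. Such a gain is integrable with mean `0` although its strategy need not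
be bounded. Hence `∑ i, E_{Qⁱ}[kⁱ + yⁱ] ≤ 0`, and the nonnegative `kⁱ + yⁱ` vanish.
-/

open MeasureTheory Filter Topology

namespace CollectiveArb

variable {Ω : Type*}

/-- Terminal gains `K_i` of admissible (predictable) strategies for an agent with
filtration `F`, trading the assets indexed by `A`, over times `1,…,T`. -/
def gainsSet {J : ℕ} (F : ℕ → MeasurableSpace Ω) (T : ℕ)
    (A : Finset (Fin J)) (X : Fin J → ℕ → Ω → ℝ) : Set (Ω → ℝ) :=
  { g | ∃ H : Fin J → ℕ → Ω → ℝ,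
      (∀ j ∈ A, ∀ s, 1 ≤ s → s ≤ T → Measurable[F (s - 1)] (H j s)) ∧
      g = fun ω => ∑ j ∈ A, ∑ s ∈ Finset.Icc 1 T, H j s ω * (X j s ω - X j (s - 1) ω) }

/-- No collective arbitrage for the gains sets `K` and the exchange set `Y`:
`(K₁ × ⋯ × K_N + Y) ∩ L⁰₊ = {0}`. -/
def NCA {N : ℕ} [MeasurableSpace Ω] (P : Measure Ω)
    (K : Fin N → Set (Ω → ℝ)) (Y : Set (Fin N → Ω → ℝ)) : Prop :=
  ∀ k : Fin N → Ω → ℝ, ∀ y ∈ Y, (∀ i, k i ∈ K i) →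
    (∀ i, ∀ᵐ ω ∂P, 0 ≤ k i ω + y i ω) →
    ∀ i, (fun ω => k i ω + y i ω) =ᵐ[P] fun _ => (0 : ℝ)

/-- `K^𝒴 = ⨉ᵢ (Kᵢ − L⁰₊(ℱᵢ_T)) + 𝒴`. -/
def KY {N : ℕ} [MeasurableSpace Ω] (P : Measure Ω)
    (FT : Fin N → MeasurableSpace Ω)
    (K : Fin N → Set (Ω → ℝ)) (Y : Set (Fin N → Ω → ℝ)) : Set (Fin N → Ω → ℝ) :=
  { f | ∃ (k l y : Fin N → Ω → ℝ), y ∈ Y ∧ (∀ i, k i ∈ K i) ∧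
      (∀ i, Measurable[FT i] (l i) ∧ (∀ᵐ ω ∂P, 0 ≤ l i ω)) ∧
      ∀ i, f i = fun ω => k i ω - l i ω + y i ω }

/-- `ℝ^N_0`: zero-sum deterministic exchanges, viewed as constant random vectors. -/
def zeroSum (Ω : Type*) (N : ℕ) : Set (Fin N → Ω → ℝ) :=
  { y | ∃ x : Fin N → ℝ, (∑ i, x i) = 0 ∧ ∀ i, y i = fun _ => x i }

/-- `span(ℝ^N_0, Y_1, …, Y_R)`: the finite-dimensional space of exchanges generated
by `ℝ^N_0` and the random vectors `Ys 1, …, Ys R`. -/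
def spanExch {N R : ℕ} (Ys : Fin R → Fin N → Ω → ℝ) : Set (Fin N → Ω → ℝ) :=
  { y | ∃ (x : Fin N → ℝ) (c : Fin R → ℝ), (∑ i, x i) = 0 ∧
      ∀ i, y i = fun ω => x i + ∑ r, c r * Ys r i ω }

/-- `span(𝒴₀ ∪ {g})` for a vector subspace `𝒴₀`. -/
def spanWith {N : ℕ} (Y0 : Set (Fin N → Ω → ℝ)) (g : Fin N → Ω → ℝ) :
    Set (Fin N → Ω → ℝ) :=
  { y | ∃ w ∈ Y0, ∃ c : ℝ, ∀ i, y i = fun ω => w i ω + c * g i ω }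

/-- Equivalent martingale measures `Mᵢₑ` for the assets in `A`, w.r.t. the filtration `F`. -/
def martMeasures {J : ℕ} [MeasurableSpace Ω] (P : Measure Ω)
    (F : ℕ → MeasurableSpace Ω) (T : ℕ) (A : Finset (Fin J))
    (X : Fin J → ℕ → Ω → ℝ) : Set (Measure Ω) :=
  { Q | IsProbabilityMeasure Q ∧ Q ≪ P ∧ P ≪ Q ∧
      ∀ j ∈ A, (∀ t, t ≤ T → Integrable (X j t) Q) ∧
        ∀ s t, s ≤ t → t ≤ T → X j s =ᵐ[Q] Q[X j t | F s] }

/-- Equivalent collective martingale measures `ℳₑ(𝒴)`. -/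
def MeY {J N : ℕ} [MeasurableSpace Ω] (P : Measure Ω)
    (F : Fin N → ℕ → MeasurableSpace Ω) (T : ℕ) (assets : Fin N → Finset (Fin J))
    (X : Fin J → ℕ → Ω → ℝ) (Y : Set (Fin N → Ω → ℝ)) : Set (Fin N → Measure Ω) :=
  { Q | (∀ i, Q i ∈ martMeasures P (F i) T (assets i) X) ∧
      (∀ y ∈ Y, ∀ i, Integrable (y i) (Q i)) ∧
      ∀ y ∈ Y, (∑ i, ∫ ω, y i ω ∂(Q i)) ≤ 0 }

/-- `ℳ^φ_e(𝒴) = {Q ∈ ℳₑ(𝒴) : E_{Qⁱ}[|φⁱ|] < ∞ ∀ i}`. -/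
def MeYphi {J N : ℕ} [MeasurableSpace Ω] (P : Measure Ω)
    (F : Fin N → ℕ → MeasurableSpace Ω) (T : ℕ) (assets : Fin N → Finset (Fin J))
    (X : Fin J → ℕ → Ω → ℝ) (Y : Set (Fin N → Ω → ℝ))
    (φ : Fin N → Ω → ℝ) : Set (Fin N → Measure Ω) :=
  { Q | Q ∈ MeY P F T assets X Y ∧ ∀ i, Integrable (φ i) (Q i) }

/-- Closedness of a set of random vectors under componentwise `P`-a.s. convergence
of sequences (within `L⁰(Ω, 𝐅_T, P)`). -/
def ClosedAS {N : ℕ} [MeasurableSpace Ω] (P : Measure Ω)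
    (FT : Fin N → MeasurableSpace Ω) (S : Set (Fin N → Ω → ℝ)) : Prop :=
  ∀ (f : ℕ → Fin N → Ω → ℝ) (g : Fin N → Ω → ℝ),
    (∀ n, f n ∈ S) → (∀ i, Measurable[FT i] (g i)) →
    (∀ i, ∀ᵐ ω ∂P, Tendsto (fun n => f n i ω) atTop (𝓝 (g i ω))) →
    g ∈ S

/-- Collective superhedging price `ρ^𝒴₊(f)` (with `inf ∅ = +∞`). -/
noncomputable def rhoPlus {N : ℕ} [MeasurableSpace Ω] (P : Measure Ω)
    (K : Fin N → Set (Ω → ℝ)) (Y : Set (Fin N → Ω → ℝ))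
    (f : Fin N → Ω → ℝ) : EReal :=
  sInf { z : EReal | ∃ m : Fin N → ℝ, z = ((∑ i, m i : ℝ) : EReal) ∧
      ∃ k : Fin N → Ω → ℝ, (∀ i, k i ∈ K i) ∧ ∃ y ∈ Y,
        ∀ i, ∀ᵐ ω ∂P, f i ω ≤ m i + k i ω + y i ω }

/-- Collective subhedging price `ρ^𝒴₋(f)` (with `sup ∅ = −∞`). -/
noncomputable def rhoMinus {N : ℕ} [MeasurableSpace Ω] (P : Measure Ω)
    (K : Fin N → Set (Ω → ℝ)) (Y : Set (Fin N → Ω → ℝ))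
    (f : Fin N → Ω → ℝ) : EReal :=
  sSup { z : EReal | ∃ m : Fin N → ℝ, z = ((∑ i, m i : ℝ) : EReal) ∧
      ∃ k : Fin N → Ω → ℝ, (∀ i, k i ∈ K i) ∧ ∃ y ∈ Y,
        ∀ i, ∀ᵐ ω ∂P, m i + k i ω - y i ω ≤ f i ω }

/-- `ρ^𝒴₊(f)` is attained. -/
def rhoPlusAttained {N : ℕ} [MeasurableSpace Ω] (P : Measure Ω)
    (K : Fin N → Set (Ω → ℝ)) (Y : Set (Fin N → Ω → ℝ))
    (f : Fin N → Ω → ℝ) : Prop :=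
  ∃ (m : Fin N → ℝ) (k y : Fin N → Ω → ℝ), y ∈ Y ∧ (∀ i, k i ∈ K i) ∧
    (∀ i, ∀ᵐ ω ∂P, f i ω ≤ m i + k i ω + y i ω) ∧
    rhoPlus P K Y f = ((∑ i, m i : ℝ) : EReal)

/-- `ρ^𝒴₋(f)` is attained. -/
def rhoMinusAttained {N : ℕ} [MeasurableSpace Ω] (P : Measure Ω)
    (K : Fin N → Set (Ω → ℝ)) (Y : Set (Fin N → Ω → ℝ))
    (f : Fin N → Ω → ℝ) : Prop :=
  ∃ (m : Fin N → ℝ) (k y : Fin N → Ω → ℝ), y ∈ Y ∧ (∀ i, k i ∈ K i) ∧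
    (∀ i, ∀ᵐ ω ∂P, m i + k i ω - y i ω ≤ f i ω) ∧
    rhoMinus P K Y f = ((∑ i, m i : ℝ) : EReal)

/-- `f` is `𝒴`-collectively replicable: `f ∈ ℝ^N + (K₁ × ⋯ × K_N) + 𝒴` in `L⁰`. -/
def Replicable {N : ℕ} [MeasurableSpace Ω] (P : Measure Ω)
    (K : Fin N → Set (Ω → ℝ)) (Y : Set (Fin N → Ω → ℝ))
    (f : Fin N → Ω → ℝ) : Prop :=
  ∃ (m : Fin N → ℝ) (k y : Fin N → Ω → ℝ), y ∈ Y ∧ (∀ i, k i ∈ K i) ∧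
    ∀ i, f i =ᵐ[P] fun ω => m i + k i ω + y i ω

section PositiveFunctional

variable {S : Type*} [MeasurableSpace S] {μ : Measure S}

theorem indicatorConstLp_one_nonneg {p : ENNReal} {s : Set S} (hs : MeasurableSet s)
    (hμs : μ s ≠ ⊤) : 0 ≤ indicatorConstLp p hs hμs (1 : ℝ) := by
  rw [← Lp.coeFn_nonneg]
  filter_upwards [indicatorConstLp_coeFn (p := p) (hs := hs) (hμs := hμs) (c := (1 : ℝ))] with x hx
  rw [hx]
  exact Set.indicator_nonneg (fun _ _ => zero_le_one) x

theorem indicatorConstLp_eq_smul_one {p : ENNReal} {s : Set S} (hs : MeasurableSet s)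
    (hμs : μ s ≠ ⊤) (c : ℝ) :
    indicatorConstLp p hs hμs c = c • indicatorConstLp p hs hμs (1 : ℝ) := by
  rw [indicatorConstLp, indicatorConstLp, ← MemLp.toLp_const_smul]
  congr
  ext x
  by_cases hx : x ∈ s <;> simp [hx]

theorem continuous_integral_of_le_smul {ν : Measure S} {c : ENNReal} (hc : c ≠ ⊤)
    (hle : ν ≤ c • μ) : Continuous fun f : Lp ℝ 1 μ => ∫ x, f x ∂ν := by
  have hL (f : Lp ℝ 1 μ) : ∫ x, Lp.LpToLpOfMeasureLeSMul hc hle f x ∂ν = ∫ x, f x ∂ν :=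
    integral_congr_ae (Lp.coeFn_LpToLpOfMeasureLeSMul hc hle f)
  simp_rw [← hL]
  exact continuous_integral.comp (ContinuousLinearMap.continuous _)

variable [IsFiniteMeasure μ]

theorem sum_range_indicatorConstLp {E : Type*} [NormedAddCommGroup E] {p : ENNReal}
    {s : ℕ → Set S} (hs : ∀ n, MeasurableSet (s n))
    (hd : Pairwise (Function.onFun Disjoint s)) (c : E) (n : ℕ) :
    ∑ k ∈ Finset.range n, indicatorConstLp p (hs k) (measure_ne_top μ _) c =
      indicatorConstLp p (.iUnion fun k => .iUnion fun _ : k < n => hs k)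
        (measure_ne_top μ (⋃ k < n, s k)) c := by
  induction n with
  | zero => simp
  | succ n ih =>
    have hdisj : Disjoint (⋃ k < n, s k) (s n) := by
      simp only [Set.disjoint_iUnion_left]
      exact fun k hk => hd hk.ne
    rw [Finset.sum_range_succ, ih, ← indicatorConstLp_disjoint_union _ _ _ _ hdisj]
    simp only [Set.biUnion_lt_succ]

theorem hasSum_map_indicatorConstLp {φ : Lp ℝ 1 μ →L[ℝ] ℝ} (hφ : ∀ f, 0 ≤ f → 0 ≤ φ f)
    {s : ℕ → Set S} (hs : ∀ n, MeasurableSet (s n))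
    (hd : Pairwise (Function.onFun Disjoint s)) :
    HasSum (fun n => φ (indicatorConstLp 1 (hs n) (measure_ne_top μ _) 1))
      (φ (indicatorConstLp 1 (.iUnion hs) (measure_ne_top μ _) 1)) := by
  have hmono : Monotone fun n => ⋃ k < n, s k := fun _ _ hmn =>
    Set.biUnion_mono (fun _ hk => lt_of_lt_of_le hk hmn) fun _ _ => le_rfl
  have hsub (n : ℕ) : ⋃ k < n, s k ⊆ ⋃ k, s k :=
    Set.iUnion_mono fun k => Set.iUnion_subset fun _ => le_rfl
  have htail : Tendsto (fun n => μ (symmDiff (⋃ k < n, s k) (⋃ k, s k))) atTop (𝓝 0) := by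
    have hlim := tendsto_measure_iUnion_atTop (μ := μ) hmono
    rw [Set.biUnion_lt_eq_iUnion] at hlim
    have hdiff (n : ℕ) :
        μ (symmDiff (⋃ k < n, s k) (⋃ k, s k)) = μ (⋃ k, s k) - μ (⋃ k < n, s k) := by
      rw [symmDiff_of_le (hsub n), measure_sdiff (hsub n) (MeasurableSet.iUnion fun k =>
        .iUnion fun _ => hs k).nullMeasurableSet (measure_ne_top μ _)]
    simp_rw [hdiff]
    simpa using ENNReal.Tendsto.sub tendsto_const_nhds hlim (.inl (measure_ne_top μ (⋃ k, s k)))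
  rw [hasSum_iff_tendsto_nat_of_nonneg fun n => hφ _ (indicatorConstLp_one_nonneg (hs n) _)]
  simp_rw [← map_sum, sum_range_indicatorConstLp hs hd]
  exact (φ.continuous.tendsto _).comp (tendsto_indicatorConstLp_set ENNReal.one_ne_top htail)

theorem exists_measure_apply_eq_ofReal_map {φ : Lp ℝ 1 μ →L[ℝ] ℝ} (hφ : ∀ f, 0 ≤ f → 0 ≤ φ f) :
    ∃ ν : Measure S, ∀ s (hs : MeasurableSet s),
      ν s = ENNReal.ofReal (φ (indicatorConstLp 1 hs (measure_ne_top μ s) 1)) := by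
  refine ⟨Measure.ofMeasurable
    (fun s hs => ENNReal.ofReal (φ (indicatorConstLp 1 hs (measure_ne_top μ s) 1))) (by simp)
    fun s hs hd => ?_, fun s hs => Measure.ofMeasurable_apply s hs⟩
  have hsum := hasSum_map_indicatorConstLp hφ hs hd
  rw [← hsum.tsum_eq, ENNReal.ofReal_tsum_of_nonneg
    (fun n => hφ _ (indicatorConstLp_one_nonneg (hs n) _)) hsum.summable]

theorem ofReal_map_indicatorConstLp_le (φ : Lp ℝ 1 μ →L[ℝ] ℝ) {s : Set S}
    (hs : MeasurableSet s) :
    ENNReal.ofReal (φ (indicatorConstLp 1 hs (measure_ne_top μ s) 1)) ≤ ‖φ‖ₑ * μ s := by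
  set e := indicatorConstLp 1 hs (measure_ne_top μ s) (1 : ℝ)
  calc ENNReal.ofReal (φ e) ≤ ‖φ e‖ₑ := Real.ofReal_le_enorm _
    _ ≤ ‖φ‖ₑ * ‖e‖ₑ := φ.le_opENorm e
    _ ≤ ‖φ‖ₑ * μ s := by
      gcongr
      simpa using enorm_indicatorConstLp_le (p := 1) (hs := hs) (hμs := measure_ne_top μ s)
        (c := (1 : ℝ))

theorem exists_measure_map_eq_integral {φ : Lp ℝ 1 μ →L[ℝ] ℝ} (hφ : ∀ f, 0 ≤ f → 0 ≤ φ f) :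
    ∃ ν ≤ ‖φ‖ₑ • μ, ∀ f : Lp ℝ 1 μ, φ f = ∫ x, f x ∂ν := by
  obtain ⟨ν, hν⟩ := exists_measure_apply_eq_ofReal_map hφ
  have hle : ν ≤ ‖φ‖ₑ • μ := Measure.le_iff.2 fun s hs =>
    (hν s hs).trans_le (ofReal_map_indicatorConstLp_le φ hs)
  have hac : ν ≪ μ := Measure.absolutelyContinuous_of_le_smul hle
  refine ⟨ν, hle, fun f => ?_⟩
  induction f using Lp.induction ENNReal.one_ne_top with
  | @indicatorConst c s hs hμs =>
    have hind : ∫ x, indicatorConstLp 1 hs (measure_ne_top μ s) (1 : ℝ) x ∂ν = ν.real s := by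
      rw [integral_congr_ae (hac.ae_eq indicatorConstLp_coeFn), integral_indicator_const _ hs,
        smul_eq_mul, mul_one]
    rw [Lp.simpleFunc.coe_indicatorConst, indicatorConstLp_eq_smul_one, map_smul,
      integral_congr_ae (hac.ae_eq (Lp.coeFn_smul _ _))]
    simp only [Pi.smul_apply, integral_smul, hind]
    rw [measureReal_def, hν s hs, ENNReal.toReal_ofReal (hφ _ (indicatorConstLp_one_nonneg hs _))]
  | add hf hg _ hf' hg' =>
    have hint {h : S → ℝ} (hh : MemLp h 1 μ) : Integrable (hh.toLp h) ν :=
      ((memLp_one_iff_integrable.1 hh).of_measure_le_smul enorm_ne_top hle).congr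
        (hac.ae_eq hh.coeFn_toLp).symm
    rw [map_add, hf', hg', ← integral_add (hint hf) (hint hg)]
    exact integral_congr_ae (hac.ae_eq (Lp.coeFn_add _ _)).symm
  | isClosed =>
    exact isClosed_eq φ.continuous (continuous_integral_of_le_smul enorm_ne_top hle)

end PositiveFunctional

section KrepsYan

variable {S : Type*} [MeasurableSpace S] {μ : Measure S} {C : PointedCone ℝ (S → ℝ)}

/-- The hypotheses of the Kreps–Yan theorem on a convex cone of random variables: it contains the
nonpositive ones, is closed under `μ`-a.e. convergence of sequences, and all its nonnegative
elements vanish `μ`-a.e. -/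
structure IsClosedArbitrageFree (μ : Measure S) (C : PointedCone ℝ (S → ℝ)) : Prop where
  mem_of_nonpos : ∀ f, Measurable f → f ≤ᵐ[μ] 0 → f ∈ C
  mem_of_tendsto : ∀ (f : ℕ → S → ℝ) (g : S → ℝ), (∀ n, f n ∈ C) → Measurable g →
    (∀ᵐ s ∂μ, Tendsto (fun n => f n s) atTop (𝓝 (g s))) → g ∈ C
  ae_eq_zero : ∀ f ∈ C, 0 ≤ᵐ[μ] f → f =ᵐ[μ] 0

theorem IsClosedArbitrageFree.mem_of_ae_eq (hC : IsClosedArbitrageFree μ C) {f g : S → ℝ}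
    (hf : f ∈ C) (hg : Measurable g) (hfg : f =ᵐ[μ] g) : g ∈ C :=
  hC.mem_of_tendsto (fun _ => f) g (fun _ => hf) hg <| by
    filter_upwards [hfg] with s hs
    exact hs ▸ tendsto_const_nhds

/-- The trace of a closed arbitrage-free cone on `L¹`, as a closed convex cone of `L¹`. -/
def IsClosedArbitrageFree.l1Cone (hC : IsClosedArbitrageFree μ C) : ProperCone ℝ (Lp ℝ 1 μ) where
  carrier := {f | ⇑f ∈ C}
  zero_mem' := hC.mem_of_ae_eq C.zero_mem (Lp.stronglyMeasurable _).measurable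
    (Lp.coeFn_zero ℝ 1 μ).symm
  add_mem' hf hg := hC.mem_of_ae_eq (C.add_mem hf hg) (Lp.stronglyMeasurable _).measurable
    (Lp.coeFn_add _ _).symm
  smul_mem' c f hf := hC.mem_of_ae_eq (C.smul_mem c.2 hf)
    (Lp.stronglyMeasurable _).measurable (Lp.coeFn_smul (c : ℝ) f).symm
  isClosed' := by
    refine IsSeqClosed.isClosed fun f g hf hfg => ?_
    obtain ⟨ns, -, hns⟩ := (tendstoInMeasure_of_tendsto_Lp hfg).exists_seq_tendsto_ae
    exact hC.mem_of_tendsto (fun n => f (ns n)) g (fun n => hf (ns n))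
      (Lp.stronglyMeasurable g).measurable hns

theorem IsClosedArbitrageFree.mem_l1Cone (hC : IsClosedArbitrageFree μ C) {f : Lp ℝ 1 μ} :
    f ∈ hC.l1Cone ↔ ⇑f ∈ C := by
  rfl

theorem IsClosedArbitrageFree.exists_measure_ne_zero [IsFiniteMeasure μ]
    (hC : IsClosedArbitrageFree μ C) {A : Set S} (hA : MeasurableSet A) (hμA : μ A ≠ 0) :
    ∃ ν ≤ μ, ν A ≠ 0 ∧ ∀ f ∈ C, Integrable f μ → ∫ s, f s ∂ν ≤ 0 := by
  have hcoe : indicatorConstLp 1 hA (measure_ne_top μ A) (1 : ℝ) =ᵐ[μ] A.indicator 1 :=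
    indicatorConstLp_coeFn
  have hA' : indicatorConstLp 1 hA (measure_ne_top μ A) (1 : ℝ) ∉ hC.l1Cone := fun h => hμA <| by
    have h0 := hC.ae_eq_zero _ (hC.mem_l1Cone.1 h)
      ((Lp.coeFn_nonneg _).2 (indicatorConstLp_one_nonneg hA _))
    simpa [Set.indicator_ae_eq_zero] using hcoe.symm.trans h0
  obtain ⟨ψ, hψC, hψA⟩ := hC.l1Cone.hyperplane_separation_point hA'
  have hψ (f : Lp ℝ 1 μ) (hf : 0 ≤ f) : 0 ≤ (-ψ) f := by
    have hf' : -f ∈ hC.l1Cone := hC.mem_l1Cone.2 <|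
      hC.mem_of_nonpos _ (Lp.stronglyMeasurable _).measurable <|
        (Lp.coeFn_le _ 0).2 (neg_nonpos.2 hf) |>.trans_eq (Lp.coeFn_zero ℝ 1 μ)
    simpa using hψC _ hf'
  obtain ⟨ν, hle, hν⟩ := exists_measure_map_eq_integral hψ
  have hac : ν ≪ μ := Measure.absolutelyContinuous_of_le_smul hle
  refine ⟨‖-ψ‖ₑ⁻¹ • ν, ?_, ?_, fun f hf hfi => ?_⟩
  · calc ‖-ψ‖ₑ⁻¹ • ν ≤ ‖-ψ‖ₑ⁻¹ • ‖-ψ‖ₑ • μ := by gcongr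
      _ ≤ (1 : ENNReal) • μ := by
        rw [smul_smul]
        gcongr
        exact ENNReal.inv_mul_le_one _
      _ = μ := one_smul _ _
  · have hνA : ν A ≠ 0 := fun h0 => by
      have h1 := hν (indicatorConstLp 1 hA (measure_ne_top μ A) 1)
      rw [integral_congr_ae (hac.ae_eq hcoe), integral_indicator_one hA, measureReal_def, h0] at h1
      exact hψA.ne (by simpa using h1)
    simpa using hνA
  · have hfC : hfi.toL1 f ∈ hC.l1Cone := hC.mem_l1Cone.2 <|
      hC.mem_of_ae_eq hf (Lp.stronglyMeasurable _).measurable hfi.coeFn_toL1.symm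
    have h1 := hν (hfi.toL1 f)
    rw [integral_congr_ae (hac.ae_eq hfi.coeFn_toL1)] at h1
    rw [integral_smul_measure, ← h1]
    exact smul_nonpos_of_nonneg_of_nonpos ENNReal.toReal_nonneg (by simpa using hψC _ hfC)

end KrepsYan

section Exhaustion

variable {S : Type*} [MeasurableSpace S] {μ : Measure S}

theorem exists_mem_forall_measure_sdiff_eq_zero (μ : Measure S) [IsFiniteMeasure μ]
    {𝒮 : Set (Set S)} (hne : 𝒮.Nonempty) (hmeas : ∀ A ∈ 𝒮, MeasurableSet A)
    (hUnion : ∀ A : ℕ → Set S, (∀ n, A n ∈ 𝒮) → ⋃ n, A n ∈ 𝒮) :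
    ∃ A ∈ 𝒮, ∀ B ∈ 𝒮, μ (B \ A) = 0 := by
  obtain ⟨u, -, hu, hu𝒮⟩ := exists_seq_tendsto_sSup (hne.image μ) (OrderTop.bddAbove _)
  choose A hA hAu using hu𝒮
  refine ⟨⋃ n, A n, hUnion A hA, fun B hB => ?_⟩
  have hBA : B ∪ ⋃ n, A n ∈ 𝒮 := by
    let A' : ℕ → Set S := fun n => n.casesOn B A
    exact Set.union_iUnion_nat_succ A' ▸ hUnion A' fun n => n.casesOn hB hA
  have hmax : μ (B ∪ ⋃ n, A n) ≤ μ (⋃ n, A n) :=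
    calc μ (B ∪ ⋃ n, A n) ≤ sSup (μ '' 𝒮) := le_sSup (Set.mem_image_of_mem μ hBA)
      _ ≤ μ (⋃ n, A n) := le_of_tendsto' hu fun n =>
        (hAu n).symm.trans_le (measure_mono (Set.subset_iUnion A n))
  exact union_ae_eq_right.1 (ae_eq_of_subset_of_measure_ge Set.subset_union_right hmax
    (hmeas _ (hUnion A hA)).nullMeasurableSet (measure_ne_top μ _)).symm

theorem exists_restrict_absolutelyContinuous [SigmaFinite μ] {ν : Measure S}
    [SFinite ν] (hνμ : ν ≪ μ) :
    ∃ A, MeasurableSet A ∧ ν Aᶜ = 0 ∧ μ.restrict A ≪ ν := by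
  have hA : MeasurableSet {x | ν.rnDeriv μ x ≠ 0} :=
    Measure.measurable_rnDeriv ν μ (measurableSet_singleton 0).compl
  have hν (s : Set S) : ν s = 0 ↔ μ ({x | ν.rnDeriv μ x ≠ 0} ∩ s) = 0 := by
    rw [← withDensity_apply_eq_zero (Measure.measurable_rnDeriv ν μ),
      Measure.withDensity_rnDeriv_eq ν μ hνμ]
  refine ⟨_, hA, by simp [hν], fun s hs => ?_⟩
  rwa [Measure.restrict_apply' hA, Set.inter_comm, ← hν]

theorem absolutelyContinuous_sum_two_inv_pow_smul (ν : ℕ → Measure S) (n : ℕ) :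
    ν n ≪ Measure.sum fun n => (2⁻¹ ^ (n + 1) : ENNReal) • ν n :=
  Measure.absolutelyContinuous_sum_right n (Measure.absolutelyContinuous_smul (by simp))

theorem sum_two_inv_pow_smul_le {ν : ℕ → Measure S} (hν : ∀ n, ν n ≤ μ) :
    Measure.sum (fun n => (2⁻¹ ^ (n + 1) : ENNReal) • ν n) ≤ μ := by
  refine Measure.le_iff.2 fun s hs => ?_
  rw [Measure.sum_apply _ hs]
  calc ∑' n, (2⁻¹ ^ (n + 1) : ENNReal) * ν n s ≤ ∑' n, (2⁻¹ ^ (n + 1) : ENNReal) * μ s := by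
        gcongr with n
        exact hν n
    _ = μ s := by
        rw [ENNReal.tsum_mul_right, ENNReal.tsum_geometric_add_one]
        simp [ENNReal.one_sub_inv_two, ENNReal.inv_mul_cancel]

/-- The argument of Halmos and Savage: a set `A` of maximal measure with `μ.restrict A ≪ ν` for some
`ν` in the family is conull, since a member charging `Aᶜ` could be mixed in to enlarge it. -/
theorem exists_absolutelyContinuous_of_forall_sum_mem [IsFiniteMeasure μ]
    {𝒢 : Set (Measure S)} (hne : 𝒢.Nonempty) (hfin : ∀ ν ∈ 𝒢, SFinite ν) (hac : ∀ ν ∈ 𝒢, ν ≪ μ)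
    (hsum : ∀ ν : ℕ → Measure S, (∀ n, ν n ∈ 𝒢) →
      Measure.sum (fun n => (2⁻¹ ^ (n + 1) : ENNReal) • ν n) ∈ 𝒢)
    (hcharge : ∀ A, MeasurableSet A → μ A ≠ 0 → ∃ ν ∈ 𝒢, ν A ≠ 0) :
    ∃ ν ∈ 𝒢, μ ≪ ν := by
  obtain ⟨A, ⟨hA, ν, hν, hAν⟩, hmax⟩ := exists_mem_forall_measure_sdiff_eq_zero μ
    (𝒮 := {A | MeasurableSet A ∧ ∃ ν ∈ 𝒢, μ.restrict A ≪ ν})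
    ⟨∅, .empty, hne.some, hne.some_mem, by simp⟩ (fun _ h => h.1) fun A hA => by
      choose hA ν hν hAν using hA
      exact ⟨.iUnion hA, _, hsum ν hν, Measure.absolutelyContinuous_of_le
        Measure.restrict_iUnion_le |>.trans <| Measure.absolutelyContinuous_sum_left fun n =>
          (hAν n).trans (absolutelyContinuous_sum_two_inv_pow_smul ν n)⟩
  have hAc : μ Aᶜ = 0 := by
    by_contra hne0
    obtain ⟨ν', hν', hν'A⟩ := hcharge Aᶜ hA.compl hne0
    have := hfin ν' hν'
    obtain ⟨B, hB, hν'B, hBν'⟩ := exists_restrict_absolutelyContinuous (hac ν' hν')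
    refine hν'A (measure_mono_null (fun x hx => ?_) (measure_union_null
      (hac ν' hν' (hmax B ⟨hB, ν', hν', hBν'⟩)) hν'B))
    by_cases hxB : x ∈ B
    · exact .inl ⟨hxB, hx⟩
    · exact .inr hxB
  refine ⟨ν, hν, ?_⟩
  rwa [Measure.restrict_eq_self_of_ae_mem (mem_ae_iff.2 hAc)] at hAν

end Exhaustion

section KrepsYanTuples

theorem IsClosedArbitrageFree.exists_measure_integral_nonpos {S : Type*} [MeasurableSpace S]
    {μ : Measure S} [IsFiniteMeasure μ] {C : PointedCone ℝ (S → ℝ)}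
    (hC : IsClosedArbitrageFree μ C) :
    ∃ ν ≤ μ, μ ≪ ν ∧ ∀ f ∈ C, Integrable f μ → ∫ s, f s ∂ν ≤ 0 := by
  obtain ⟨ν, ⟨hνμ, hν⟩, hμν⟩ := exists_absolutelyContinuous_of_forall_sum_mem (μ := μ)
    (𝒢 := {ν | ν ≤ μ ∧ ∀ f ∈ C, Integrable f μ → ∫ s, f s ∂ν ≤ 0})
    ⟨0, Measure.zero_le μ, by simp⟩
    (fun ν hν => have := isFiniteMeasure_of_le μ hν.1; inferInstance)
    (fun ν hν => Measure.absolutelyContinuous_of_le hν.1)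
    (fun ν hν => ⟨sum_two_inv_pow_smul_le fun n => (hν n).1, fun f hf hfi => by
      have hsum := hasSum_integral_measure
        (hfi.mono_measure (sum_two_inv_pow_smul_le fun n => (hν n).1))
      simp only [integral_smul_measure] at hsum
      exact hsum.nonpos fun n =>
        smul_nonpos_of_nonneg_of_nonpos ENNReal.toReal_nonneg ((hν n).2 f hf hfi)⟩)
    (fun A hA hμA => by
      obtain ⟨ν, hνμ, hνA, hν⟩ := hC.exists_measure_ne_zero hA hμA
      exact ⟨ν, ⟨hνμ, hν⟩, hνA⟩)
  exact ⟨ν, hνμ, hμν, hν⟩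

variable {ι : Type*} {β : ι → Type*} {mβ : ∀ i, MeasurableSpace (β i)}

theorem measurableEmbedding_sigmaMk (i : ι) : MeasurableEmbedding (Sigma.mk i : β i → Sigma β) where
  injective := sigma_mk_injective
  measurable s hs := MeasurableSpace.measurableSet_iInf.1 hs i
  measurableSet_image' s hs := MeasurableSpace.measurableSet_iInf.2 fun j => by
    change MeasurableSet (Sigma.mk j ⁻¹' (Sigma.mk i '' s))
    obtain rfl | hij := eq_or_ne j i
    · rwa [Set.preimage_image_eq s sigma_mk_injective]
    · simp [Set.preimage_image_sigmaMk_of_ne hij]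

/-- The disjoint union of a family of measures, a measure on the sigma type. It turns tuples of
random variables on different spaces into single random variables. -/
noncomputable def sigmaMeasure (μ : ∀ i, Measure (β i)) : Measure (Sigma β) :=
  Measure.sum fun i => (μ i).map (Sigma.mk i)

theorem ae_sigmaMeasure_iff [Countable ι] {μ : ∀ i, Measure (β i)} {p : Sigma β → Prop} :
    (∀ᵐ x ∂sigmaMeasure μ, p x) ↔ ∀ i, ∀ᵐ s ∂μ i, p ⟨i, s⟩ := by
  simp_rw [sigmaMeasure, Measure.ae_sum_iff, (measurableEmbedding_sigmaMk _).ae_map_iff]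

theorem sigmaMeasure_image_sigmaMk (μ : ∀ i, Measure (β i)) (i : ι) {s : Set (β i)}
    (hs : MeasurableSet s) : sigmaMeasure μ (Sigma.mk i '' s) = μ i s := by
  rw [sigmaMeasure, Measure.sum_apply _ ((measurableEmbedding_sigmaMk i).measurableSet_image' hs)]
  simp_rw [(measurableEmbedding_sigmaMk _).map_apply]
  rw [tsum_eq_single i fun j hj => by simp [Set.preimage_image_sigmaMk_of_ne hj],
    Set.preimage_image_eq s sigma_mk_injective]

theorem sigmaMeasure_comap_sigmaMk [Countable ι] (ν : Measure (Sigma β)) :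
    sigmaMeasure (fun i => ν.comap (Sigma.mk i)) = ν := by
  simp_rw [sigmaMeasure, (measurableEmbedding_sigmaMk _).map_comap]
  rw [← Measure.restrict_iUnion (fun i j hij => Set.disjoint_left.2 ?_)
    fun i => (measurableEmbedding_sigmaMk i).measurableSet_range]
  · have huniv : ⋃ i, Set.range (Sigma.mk i : β i → Sigma β) = Set.univ :=
      Set.iUnion_eq_univ_iff.2 fun x => ⟨x.1, x.2, rfl⟩
    rw [huniv, Measure.restrict_univ]
  · rintro _ ⟨s, rfl⟩ ⟨t, ht⟩
    exact hij (congrArg Sigma.fst ht).symm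

theorem integrable_sigmaMeasure_iff [Finite ι] {μ : ∀ i, Measure (β i)} {f : Sigma β → ℝ} :
    Integrable f (sigmaMeasure μ) ↔ ∀ i, Integrable (fun s => f ⟨i, s⟩) (μ i) := by
  cases nonempty_fintype ι
  simp_rw [sigmaMeasure, Measure.sum_fintype, integrable_finsetSum_measure, Finset.mem_univ,
    true_imp_iff, (measurableEmbedding_sigmaMk _).integrable_map_iff, Function.comp_def]

theorem integral_sigmaMeasure [Fintype ι] {μ : ∀ i, Measure (β i)} {f : Sigma β → ℝ}
    (hf : Integrable f (sigmaMeasure μ)) :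
    ∫ x, f x ∂sigmaMeasure μ = ∑ i, ∫ s, f ⟨i, s⟩ ∂μ i := by
  rw [sigmaMeasure] at hf ⊢
  rw [← (hasSum_integral_measure hf).tsum_eq, tsum_fintype]
  simp_rw [(measurableEmbedding_sigmaMk _).integral_map]

instance [Finite ι] (μ : ∀ i, Measure (β i)) [∀ i, IsFiniteMeasure (μ i)] :
    IsFiniteMeasure (sigmaMeasure μ) := by
  cases nonempty_fintype ι
  rw [sigmaMeasure, Measure.sum_fintype]
  infer_instance

theorem exists_measure_sum_integral_nonpos [Fintype ι] (μ : ∀ i, Measure (β i))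
    [∀ i, IsFiniteMeasure (μ i)] (C : PointedCone ℝ (∀ i, β i → ℝ))
    (hneg : ∀ f : ∀ i, β i → ℝ, (∀ i, Measurable (f i)) → (∀ i, f i ≤ᵐ[μ i] 0) → f ∈ C)
    (hclosed : ∀ (f : ℕ → ∀ i, β i → ℝ) (g : ∀ i, β i → ℝ), (∀ n, f n ∈ C) →
      (∀ i, Measurable (g i)) →
      (∀ i, ∀ᵐ s ∂μ i, Tendsto (fun n => f n i s) atTop (𝓝 (g i s))) → g ∈ C)
    (hpos : ∀ f ∈ C, (∀ i, 0 ≤ᵐ[μ i] f i) → ∀ i, f i =ᵐ[μ i] 0) :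
    ∃ ν : ∀ i, Measure (β i), (∀ i, ν i ≤ μ i) ∧ (∀ i, μ i ≪ ν i) ∧
      ∀ f ∈ C, (∀ i, Integrable (f i) (μ i)) → ∑ i, ∫ s, f i s ∂ν i ≤ 0 := by
  have hmk (i : ι) := measurableEmbedding_sigmaMk (β := β) i
  have hC : IsClosedArbitrageFree (sigmaMeasure μ)
      (C.comap (LinearEquiv.piCurry ℝ fun i (_ : β i) => ℝ).toLinearMap) :=
    { mem_of_nonpos := fun f hf hf0 =>
        hneg _ (fun i => hf.comp (hmk i).measurable) (ae_sigmaMeasure_iff.1 hf0)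
      mem_of_tendsto := fun f g hf hg hfg =>
        hclosed _ _ hf (fun i => hg.comp (hmk i).measurable) (ae_sigmaMeasure_iff.1 hfg)
      ae_eq_zero := fun f hf hf0 =>
        ae_sigmaMeasure_iff.2 (hpos _ hf (ae_sigmaMeasure_iff.1 hf0)) }
  obtain ⟨ν, hle, hac, hν⟩ := hC.exists_measure_integral_nonpos
  refine ⟨fun i => ν.comap (Sigma.mk i), fun i => Measure.le_iff.2 fun s hs => ?_,
    fun i => Measure.AbsolutelyContinuous.mk fun s hs h0 => ?_, fun f hf hfi => ?_⟩
  · rw [(hmk i).comap_apply, ← sigmaMeasure_image_sigmaMk μ i hs]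
    exact hle _
  · rw [(hmk i).comap_apply] at h0
    rw [← sigmaMeasure_image_sigmaMk μ i hs, hac h0]
  · have hfi' : Integrable (fun x : Sigma β => f x.1 x.2) (sigmaMeasure μ) :=
      integrable_sigmaMeasure_iff.2 hfi
    have h := hν _ hf hfi'
    rw [← sigmaMeasure_comap_sigmaMk ν] at hle h
    rwa [integral_sigmaMeasure (hfi'.mono_measure hle)] at h

end KrepsYanTuples

section EquivalentMeasures

variable {m0 : MeasurableSpace Ω} {μ : Measure Ω}

theorem withDensity_le_self {f : Ω → ENNReal} (hf : f ≤ᵐ[μ] 1) : μ.withDensity f ≤ μ := by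
  simpa using withDensity_mono hf

theorem exists_le_forall_integrable {E κ : Type*} [NormedAddCommGroup E]
    (μ : Measure Ω) [IsFiniteMeasure μ] (A : Finset κ) {X : κ → Ω → E}
    (hX : ∀ j ∈ A, AEStronglyMeasurable (X j) μ) :
    ∃ ν ≤ μ, μ ≪ ν ∧ ∀ j ∈ A, Integrable (X j) ν := by
  have hd : AEMeasurable (fun ω => (1 + ∑ j ∈ A, ‖X j ω‖ₑ)⁻¹) μ :=
    (aemeasurable_const.add (Finset.aemeasurable_fun_sum A fun j hj => (hX j hj).enorm)).inv
  have hle : μ.withDensity (fun ω => (1 + ∑ j ∈ A, ‖X j ω‖ₑ)⁻¹) ≤ μ :=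
    withDensity_le_self (ae_of_all μ fun ω => ENNReal.inv_le_one.2 le_self_add)
  refine ⟨_, hle, withDensity_absolutelyContinuous' hd (ae_of_all μ fun ω => by simp),
    fun j hj => ⟨(hX j hj).mono_measure hle, ?_⟩⟩
  rw [HasFiniteIntegral, lintegral_withDensity_eq_lintegral_mul₀ hd (hX j hj).enorm]
  have hbound (ω : Ω) : (1 + ∑ j ∈ A, ‖X j ω‖ₑ)⁻¹ * ‖X j ω‖ₑ ≤ 1 := by
    rw [mul_comm, ← div_eq_mul_inv]
    refine ENNReal.div_le_of_le_mul ?_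
    rw [one_mul]
    exact (Finset.single_le_sum (f := fun j => ‖X j ω‖ₑ) (fun _ _ => zero_le) hj).trans le_add_self
  calc ∫⁻ ω, (1 + ∑ j ∈ A, ‖X j ω‖ₑ)⁻¹ * ‖X j ω‖ₑ ∂μ ≤ ∫⁻ _, 1 ∂μ := lintegral_mono hbound
    _ < ⊤ := by simp

theorem exists_le_trim_eq {m : MeasurableSpace Ω} (hm : m ≤ m0) [IsFiniteMeasure μ]
    {ν : @Measure Ω m} (hle : ν ≤ μ.trim hm) (hac : μ.trim hm ≪ ν) :
    ∃ ν' ≤ μ, μ ≪ ν' ∧ ν'.trim hm = ν := by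
  have : IsFiniteMeasure ν := isFiniteMeasure_of_le _ hle
  have hd : Measurable[m] (ν.rnDeriv (μ.trim hm)) := Measure.measurable_rnDeriv ν (μ.trim hm)
  refine ⟨μ.withDensity (ν.rnDeriv (μ.trim hm)), withDensity_le_self ?_,
    withDensity_absolutelyContinuous' (hd.mono hm le_rfl).aemeasurable ?_, ?_⟩
  · exact ae_of_ae_trim hm (Measure.rnDeriv_le_one_of_le hle)
  · filter_upwards [ae_of_ae_trim hm (Measure.rnDeriv_pos' hac)] with ω hω
    exact hω.ne'
  · refine @Measure.ext _ m _ _ fun s hs => ?_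
    rw [trim_measurableSet_eq hm hs, withDensity_apply _ (hm s hs), ← setLIntegral_trim hm hd hs,
      ← withDensity_apply _ hs, Measure.withDensity_rnDeriv_eq _ _
        (Measure.absolutelyContinuous_of_le hle)]

end EquivalentMeasures

section PricingMeasures

variable {N : ℕ} {m0 : MeasurableSpace Ω} {P μ : Measure Ω} {FT : Fin N → MeasurableSpace Ω}
  {K : Fin N → Submodule ℝ (Ω → ℝ)} {Y : PointedCone ℝ (Fin N → Ω → ℝ)}

/-- The set `K^𝒴` as a convex cone, for linear gains spaces `K i` and a convex cone `𝒴` of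
exchanges. -/
def kyCone (P : Measure Ω) (FT : Fin N → MeasurableSpace Ω) (K : Fin N → Submodule ℝ (Ω → ℝ))
    (Y : PointedCone ℝ (Fin N → Ω → ℝ)) : PointedCone ℝ (Fin N → Ω → ℝ) where
  carrier := KY P FT (fun i => K i) Y
  zero_mem' := ⟨0, 0, 0, Y.zero_mem, fun i => (K i).zero_mem,
    fun _ => ⟨measurable_const, ae_of_all P fun _ => le_rfl⟩, fun i => by ext; simp⟩
  add_mem' := by
    rintro f f' ⟨k, l, y, hy, hk, hl, hf⟩ ⟨k', l', y', hy', hk', hl', hf'⟩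
    refine ⟨k + k', l + l', y + y', Y.add_mem hy hy', fun i => (K i).add_mem (hk i) (hk' i),
      fun i => ⟨(hl i).1.add (hl' i).1, ?_⟩, fun i => ?_⟩
    · filter_upwards [(hl i).2, (hl' i).2] with ω h h' using add_nonneg h h'
    · ext ω
      simp only [Pi.add_apply, hf i, hf' i]
      ring
  smul_mem' := by
    rintro ⟨c, hc⟩ f ⟨k, l, y, hy, hk, hl, hf⟩
    refine ⟨c • k, c • l, c • y, Y.smul_mem hc hy, fun i => (K i).smul_mem c (hk i),
      fun i => ⟨(hl i).1.const_smul c, ?_⟩, fun i => ?_⟩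
    · filter_upwards [(hl i).2] with ω h using mul_nonneg hc h
    · ext ω
      change c * f i ω = c * k i ω - c * l i ω + c * y i ω
      rw [hf i]
      ring

theorem mem_kyCone_of_forall_mem {k : Fin N → Ω → ℝ} (hk : ∀ i, k i ∈ K i) :
    k ∈ kyCone P FT K Y :=
  ⟨k, 0, 0, Y.zero_mem, hk, fun _ => ⟨measurable_const, ae_of_all P fun _ => le_rfl⟩,
    fun i => by ext; simp⟩

theorem le_kyCone : Y ≤ kyCone P FT K Y := fun y hy =>
  ⟨0, 0, y, hy, fun i => (K i).zero_mem, fun _ => ⟨measurable_const, ae_of_all P fun _ => le_rfl⟩,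
    fun i => by ext; simp⟩

theorem mem_kyCone_of_nonpos {f : Fin N → Ω → ℝ} (hf : ∀ i, Measurable[FT i] (f i))
    (hf0 : ∀ i, f i ≤ᵐ[P] 0) : f ∈ kyCone P FT K Y := by
  refine ⟨0, -f, 0, Y.zero_mem, fun i => (K i).zero_mem, fun i => ⟨(hf i).neg, ?_⟩,
    fun i => by ext; simp⟩
  filter_upwards [hf0 i] with ω h using neg_nonneg.2 h

theorem measurable_of_mem_kyCone (hK : ∀ i, ∀ k ∈ K i, Measurable[FT i] k)
    (hY : ∀ y ∈ Y, ∀ i, Measurable[FT i] (y i)) {f : Fin N → Ω → ℝ}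
    (hf : f ∈ kyCone P FT K Y) (i : Fin N) : Measurable[FT i] (f i) := by
  obtain ⟨k, l, y, hy, hk, hl, hf⟩ := hf
  rw [hf i]
  exact ((hK i _ (hk i)).sub (hl i).1).add (hY y hy i)

theorem NCA.ae_eq_zero_of_mem_kyCone (hNCA : NCA P (fun i => (K i : Set (Ω → ℝ))) Y)
    {f : Fin N → Ω → ℝ} (hf : f ∈ kyCone P FT K Y) (hf0 : ∀ i, 0 ≤ᵐ[P] f i) (i : Fin N) :
    f i =ᵐ[P] 0 := by
  obtain ⟨k, l, y, hy, hk, hl, hf⟩ := hf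
  have hky (i : Fin N) : ∀ᵐ ω ∂P, 0 ≤ k i ω - l i ω + y i ω := by
    simpa [EventuallyLE, hf i] using hf0 i
  have hzero := hNCA k y hy hk (fun i => by
    filter_upwards [hky i, (hl i).2] with ω h hl
    linarith) i
  filter_upwards [hky i, (hl i).2, hzero] with ω h hl h0
  simp only [hf i, Pi.zero_apply]
  linarith

theorem NCA.exists_measure_sum_integral_kyCone_nonpos [IsFiniteMeasure μ]
    (hNCA : NCA P (fun i => (K i : Set (Ω → ℝ))) Y)
    (hclosed : ClosedAS P FT (KY P FT (fun i => (K i : Set (Ω → ℝ))) Y))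
    (hFT : ∀ i, FT i ≤ m0) (hK : ∀ i, ∀ k ∈ K i, Measurable[FT i] k)
    (hY : ∀ y ∈ Y, ∀ i, Measurable[FT i] (y i)) (hμP : μ ≪ P) (hPμ : P ≪ μ) :
    ∃ ν : Fin N → Measure Ω, (∀ i, ν i ≤ μ) ∧ (∀ i, μ ≪ ν i) ∧
      ∀ f ∈ kyCone P FT K Y, (∀ i, Integrable (f i) μ) → ∑ i, ∫ ω, f i ω ∂ν i ≤ 0 := by
  have htrim {i : Fin N} {p : Ω → Prop} (hp : ∀ᵐ ω ∂μ.trim (hFT i), p ω) : ∀ᵐ ω ∂P, p ω :=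
    hPμ.ae_le (ae_of_ae_trim (hFT i) hp)
  have hmeas {f : Fin N → Ω → ℝ} (hf : f ∈ kyCone P FT K Y) (i : Fin N) :
      StronglyMeasurable[FT i] (f i) := (measurable_of_mem_kyCone hK hY hf i).stronglyMeasurable
  obtain ⟨ν, hle, hac, hν⟩ := exists_measure_sum_integral_nonpos
    (mβ := FT) (fun i => μ.trim (hFT i)) (kyCone P FT K Y)
    (fun f hf hf0 => mem_kyCone_of_nonpos hf fun i => htrim (hf0 i))
    (fun f g hf hg hfg => hclosed f g hf hg fun i => htrim (hfg i))
    (fun f hf hf0 i => (hmeas hf i).ae_eq_trim_of_stronglyMeasurable (hFT i)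
      stronglyMeasurable_zero
      (hμP.ae_le (hNCA.ae_eq_zero_of_mem_kyCone hf (fun i => htrim (hf0 i)) i)))
  choose ν' hν'le hμν' hν' using fun i => exists_le_trim_eq (hFT i) (hle i) (hac i)
  refine ⟨ν', hν'le, hμν', fun f hf hfi => ?_⟩
  calc ∑ i, ∫ ω, f i ω ∂ν' i = ∑ i, ∫ ω, f i ω ∂ν i :=
        Finset.sum_congr rfl fun i _ => by rw [← hν' i, integral_trim (hFT i) (hmeas hf i)]
    _ ≤ 0 := hν f hf fun i => (hfi i).trim (hFT i) (hmeas hf i)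

theorem integral_eq_zero_of_sum_integral_kyCone_nonpos {ν : Fin N → Measure Ω}
    (hν : ∀ f ∈ kyCone P FT K Y, (∀ i, Integrable (f i) μ) → ∑ i, ∫ ω, f i ω ∂ν i ≤ 0)
    {i : Fin N} {k : Ω → ℝ} (hk : k ∈ K i) (hki : Integrable k μ) : ∫ ω, k ω ∂ν i = 0 := by
  have hle {k : Ω → ℝ} (hk : k ∈ K i) (hki : Integrable k μ) : ∫ ω, k ω ∂ν i ≤ 0 := by
    have hmem (l : Fin N) : (Pi.single i k : Fin N → Ω → ℝ) l ∈ K l := by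
      obtain rfl | hl := eq_or_ne l i
      · simpa using hk
      · simp [hl, (K l).zero_mem]
    have hint (l : Fin N) : Integrable ((Pi.single i k : Fin N → Ω → ℝ) l) μ := by
      obtain rfl | hl := eq_or_ne l i
      · simpa using hki
      · simp [hl]
    have h := hν _ (mem_kyCone_of_forall_mem hmem) hint
    rw [Finset.sum_eq_single_of_mem i (Finset.mem_univ i) fun l _ hl => by simp [hl]] at h
    simpa using h
  refine le_antisymm (hle hk hki) ?_
  have h := hle ((K i).neg_mem hk) hki.neg
  simp only [Pi.neg_apply, integral_neg] at h
  linarith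

theorem measure_univ_eq_of_sum_integral_kyCone_nonpos [IsFiniteMeasure μ] {ν : Fin N → Measure Ω}
    [∀ i, IsFiniteMeasure (ν i)] (hzero : zeroSum Ω N ⊆ Y)
    (hν : ∀ f ∈ kyCone P FT K Y, (∀ i, Integrable (f i) μ) → ∑ i, ∫ ω, f i ω ∂ν i ≤ 0)
    (i j : Fin N) : ν i Set.univ = ν j Set.univ := by
  -- Transferring one unit of cash from agent `j` to agent `i` is an admissible exchange.
  have hle (i j : Fin N) : (ν i).real Set.univ ≤ (ν j).real Set.univ := by
    have h := hν (fun l _ => (Pi.single i 1 - Pi.single j 1 : Fin N → ℝ) l)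
      (le_kyCone (hzero ⟨_, by simp, fun _ => rfl⟩)) fun _ => integrable_const _
    simp_rw [integral_const, smul_eq_mul, Pi.sub_apply, mul_sub, Finset.sum_sub_distrib] at h
    simpa [Pi.single_apply] using h
  exact (measureReal_eq_measureReal_iff).1 (le_antisymm (hle i j) (hle j i))

theorem NCA.exists_isProbabilityMeasure_sum_integral_kyCone_nonpos [IsFiniteMeasure μ] [NeZero μ]
    (hNCA : NCA P (fun i => (K i : Set (Ω → ℝ))) Y)
    (hclosed : ClosedAS P FT (KY P FT (fun i => (K i : Set (Ω → ℝ))) Y))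
    (hFT : ∀ i, FT i ≤ m0) (hK : ∀ i, ∀ k ∈ K i, Measurable[FT i] k)
    (hY : ∀ y ∈ Y, ∀ i, Measurable[FT i] (y i)) (hzero : zeroSum Ω N ⊆ Y)
    (hμP : μ ≪ P) (hPμ : P ≪ μ) :
    ∃ Q : Fin N → Measure Ω, (∀ i, IsProbabilityMeasure (Q i)) ∧
      (∀ i, ∃ c : ENNReal, c ≠ ⊤ ∧ Q i ≤ c • μ) ∧ (∀ i, μ ≪ Q i) ∧
      ∀ f ∈ kyCone P FT K Y, (∀ i, Integrable (f i) μ) → ∑ i, ∫ ω, f i ω ∂Q i ≤ 0 := by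
  obtain ⟨ν, hle, hac, hν⟩ :=
    hNCA.exists_measure_sum_integral_kyCone_nonpos hclosed hFT hK hY hμP hPμ
  have hfin (i : Fin N) : IsFiniteMeasure (ν i) := isFiniteMeasure_of_le μ (hle i)
  have hne (i : Fin N) : NeZero (ν i) :=
    ⟨fun h => NeZero.ne μ (Measure.absolutelyContinuous_zero_iff.1 (h ▸ hac i))⟩
  have hinv (i : Fin N) : (ν i Set.univ)⁻¹ ≠ ⊤ :=
    ENNReal.inv_ne_top.2 (Measure.measure_univ_ne_zero.2 (NeZero.ne (ν i)))
  have hsmul (i : Fin N) : (ν i Set.univ)⁻¹ • ν i ≤ (ν i Set.univ)⁻¹ • μ := by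
    gcongr
    exact hle i
  refine ⟨fun i => (ν i Set.univ)⁻¹ • ν i, fun i => inferInstance,
    fun i => ⟨_, hinv i, hsmul i⟩, fun i => (hac i).trans
      (Measure.absolutelyContinuous_smul (ENNReal.inv_ne_zero.2 (measure_ne_top _ _))),
    fun f hf hfi => ?_⟩
  obtain hN | ⟨⟨i₀⟩⟩ := isEmpty_or_nonempty (Fin N)
  · simp
  simp_rw [measure_univ_eq_of_sum_integral_kyCone_nonpos hzero hν _ i₀, integral_smul_measure,
    ← Finset.smul_sum]
  exact mul_nonpos_of_nonneg_of_nonpos ENNReal.toReal_nonneg (hν f hf hfi)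

end PricingMeasures

section LocallyCentered

theorem measurableSet_abs_le {_ : MeasurableSpace Ω} {H : Ω → ℝ} (hH : Measurable H) (c : ℝ) :
    MeasurableSet {ω | |H ω| ≤ c} :=
  hH.abs measurableSet_Iic

theorem eventually_mem_abs_le (H : Ω → ℝ) (ω : Ω) :
    ∀ᶠ n : ℕ in atTop, ω ∈ {ω | |H ω| ≤ n} := by
  filter_upwards [eventually_ge_atTop ⌈|H ω|⌉₊] with n hn using Nat.ceil_le.1 hn

variable {m m0 : MeasurableSpace Ω} {Q : Measure Ω} {D D' V W : Ω → ℝ}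

/-- `D` has conditional mean `0` given `m` in a generalized sense: `m`-measurable sets exhaust
`Ω`, and on each of them `D` is integrable with vanishing conditional expectation. The one-step
gains of an arbitrary predictable strategy are of this kind, although they need not be
integrable. -/
def IsLocallyCentered (Q : Measure Ω) (m : MeasurableSpace Ω) (D : Ω → ℝ) : Prop :=
  ∃ S : ℕ → Set Ω, (∀ n, MeasurableSet[m] (S n)) ∧ (∀ ω, ∀ᶠ n in atTop, ω ∈ S n) ∧
    ∀ n, Integrable ((S n).indicator D) Q ∧ Q[(S n).indicator D | m] =ᵐ[Q] 0

theorem condExp_indicator_eq_zero (hD : Integrable D Q) (hD0 : Q[D | m] =ᵐ[Q] 0) {B : Set Ω}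
    (hB : MeasurableSet[m] B) : Q[B.indicator D | m] =ᵐ[Q] 0 := by
  filter_upwards [condExp_indicator hD hB, hD0] with ω h h0
  rw [h]
  exact Set.indicator_apply_eq_zero.2 fun _ => h0

theorem isLocallyCentered_of_condExp_eq_zero (hD : Integrable D Q) (hD0 : Q[D | m] =ᵐ[Q] 0) :
    IsLocallyCentered Q m D :=
  ⟨fun _ => Set.univ, fun _ => MeasurableSet.univ, fun _ => by simp, fun _ => by simp [hD, hD0]⟩

theorem IsLocallyCentered.exists_subset (hm : m ≤ m0) (hD : IsLocallyCentered Q m D)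
    {B : ℕ → Set Ω} (hB : ∀ n, MeasurableSet[m] (B n)) (hBmem : ∀ ω, ∀ᶠ n in atTop, ω ∈ B n) :
    ∃ S : ℕ → Set Ω, (∀ n, S n ⊆ B n) ∧ (∀ n, MeasurableSet[m] (S n)) ∧
      (∀ ω, ∀ᶠ n in atTop, ω ∈ S n) ∧
      ∀ n, Integrable ((S n).indicator D) Q ∧ Q[(S n).indicator D | m] =ᵐ[Q] 0 := by
  obtain ⟨S, hS, hSmem, hSD⟩ := hD
  refine ⟨fun n => B n ∩ S n, fun n => Set.inter_subset_left, fun n => (hB n).inter (hS n),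
    fun ω => (hBmem ω).and (hSmem ω), fun n => ?_⟩
  rw [← Set.indicator_indicator]
  exact ⟨(hSD n).1.indicator (hm _ (hB n)),
    condExp_indicator_eq_zero (hSD n).1 (hSD n).2 (hB n)⟩

theorem IsLocallyCentered.mul [IsFiniteMeasure Q] (hm : m ≤ m0) (hD : IsLocallyCentered Q m D)
    {H : Ω → ℝ} (hH : Measurable[m] H) : IsLocallyCentered Q m (H * D) := by
  obtain ⟨S, hSH, hS, hSmem, hSD⟩ := hD.exists_subset hm
    (fun n => measurableSet_abs_le hH n) (eventually_mem_abs_le H)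
  refine ⟨S, hS, hSmem, fun n => ?_⟩
  have hHn : StronglyMeasurable[m] ((S n).indicator H) := (hH.indicator (hS n)).stronglyMeasurable
  have hbound (ω : Ω) : ‖(S n).indicator H ω‖ ≤ n := by
    by_cases hω : ω ∈ S n
    · simpa [hω] using hSH n hω
    · simp [hω]
  have heq : (S n).indicator (H * D) = (S n).indicator H * (S n).indicator D :=
    Set.indicator_mul _ H D
  rw [heq]
  refine ⟨(hSD n).1.bdd_mul (hHn.mono hm).aestronglyMeasurable (ae_of_all Q hbound), ?_⟩
  filter_upwards [condExp_stronglyMeasurable_mul_of_bound hm hHn (hSD n).1 n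
    (ae_of_all Q hbound), (hSD n).2] with ω h h0
  simp [h, h0]

theorem IsLocallyCentered.add (hm : m ≤ m0) (hD : IsLocallyCentered Q m D)
    (hD' : IsLocallyCentered Q m D') : IsLocallyCentered Q m (D + D') := by
  obtain ⟨S', hS', hSmem', hSD'⟩ := hD'
  obtain ⟨S, hSS', hS, hSmem, hSD⟩ := hD.exists_subset hm hS' hSmem'
  refine ⟨S, hS, hSmem, fun n => ?_⟩
  have heq : (S n).indicator (D + D') =
      (S n).indicator D + (S n).indicator ((S' n).indicator D') := by
    rw [Set.indicator_add', Set.indicator_indicator, Set.inter_eq_left.2 (hSS' n)]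
  have hi' : Integrable ((S n).indicator ((S' n).indicator D')) Q :=
    (hSD' n).1.indicator (hm _ (hS n))
  rw [heq]
  refine ⟨(hSD n).1.add hi', ?_⟩
  filter_upwards [condExp_add (hSD n).1 hi' m, (hSD n).2,
    condExp_indicator_eq_zero (hSD' n).1 (hSD' n).2 (hS n)] with ω h h0 h0'
  simp [h, h0, h0']

theorem IsLocallyCentered.sum {ι : Type*} (hm : m ≤ m0) {A : Finset ι} {D : ι → Ω → ℝ}
    (hD : ∀ j ∈ A, IsLocallyCentered Q m (D j)) : IsLocallyCentered Q m (∑ j ∈ A, D j) :=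
  Finset.sum_induction D (IsLocallyCentered Q m) (fun _ _ => .add hm)
    (isLocallyCentered_of_condExp_eq_zero (integrable_zero _ _ _) (by simp [condExp_zero])) hD

theorem isLocallyCentered_sum_mul_sub [IsFiniteMeasure Q] (hm : m ≤ m0) {ι : Type*}
    {A : Finset ι} {H Y Z : ι → Ω → ℝ} (hH : ∀ j ∈ A, Measurable[m] (H j))
    (hY : ∀ j ∈ A, Integrable (Y j) Q) (hZ : ∀ j ∈ A, Integrable (Z j) Q)
    (hYZ : ∀ j ∈ A, Q[Z j | m] =ᵐ[Q] Q[Y j | m]) :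
    IsLocallyCentered Q m (∑ j ∈ A, H j * (Z j - Y j)) := by
  refine .sum hm fun j hj => .mul hm ?_ (hH j hj)
  refine isLocallyCentered_of_condExp_eq_zero ((hZ j hj).sub (hY j hj)) ?_
  filter_upwards [condExp_sub (hZ j hj) (hY j hj) m, hYZ j hj] with ω hsub h
  rw [hsub, Pi.sub_apply, h, sub_self, Pi.zero_apply]

theorem neg_condExp_le_of_condExp_eq_zero [IsFiniteMeasure Q] (hm : m ≤ m0) (hD : Integrable D Q)
    (hD0 : Q[D | m] =ᵐ[Q] 0) (hV : StronglyMeasurable[m] V) (hVi : Integrable V Q)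
    (hW : Integrable W Q) (hle : -W ≤ᵐ[Q] V + D) : -Q[W | m] ≤ᵐ[Q] V := by
  filter_upwards [condExp_mono (m := m) hW.neg (hVi.add hD) hle, condExp_neg W m,
    condExp_add hVi hD m, hD0] with ω h hneg hadd h0
  rwa [hneg, hadd, Pi.add_apply, condExp_of_stronglyMeasurable hm hV hVi, h0, Pi.zero_apply,
    add_zero] at h

theorem IsLocallyCentered.neg_condExp_le [IsFiniteMeasure Q] (hm : m ≤ m0)
    (hD : IsLocallyCentered Q m D) (hV : Measurable[m] V) (hW : Integrable W Q)
    (hle : -W ≤ᵐ[Q] V + D) : -Q[W | m] ≤ᵐ[Q] V := by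
  obtain ⟨S, hSV, hS, hSmem, hSD⟩ := hD.exists_subset hm
    (fun n => measurableSet_abs_le hV n) (eventually_mem_abs_le V)
  have hbound (n : ℕ) : ∀ᵐ ω ∂Q, ω ∈ S n → -(Q[W | m]) ω ≤ V ω := by
    have hVm : StronglyMeasurable[m] ((S n).indicator V) :=
      (hV.indicator (hS n)).stronglyMeasurable
    have hVi : Integrable ((S n).indicator V) Q := by
      refine .of_bound (hVm.mono hm).aestronglyMeasurable n (ae_of_all Q fun ω => ?_)
      by_cases hω : ω ∈ S n
      · simpa [hω] using hSV n hω
      · simp [hω]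
    have hleS : -(S n).indicator W ≤ᵐ[Q] (S n).indicator V + (S n).indicator D := by
      filter_upwards [hle] with ω h
      by_cases hω : ω ∈ S n
      · simpa [hω] using h
      · simp [hω]
    filter_upwards [neg_condExp_le_of_condExp_eq_zero hm (hSD n).1 (hSD n).2 hVm hVi
      (hW.indicator (hm _ (hS n))) hleS, condExp_indicator hW (hS n)] with ω h hind hω
    simpa [hind, hω] using h
  filter_upwards [ae_all_iff.2 hbound] with ω hω
  obtain ⟨n, hn⟩ := (hSmem ω).exists
  exact hω n hn

theorem IsLocallyCentered.integrable_and_integral_eq_zero [IsFiniteMeasure Q] (hm : m ≤ m0)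
    (hD : IsLocallyCentered Q m D) (hW : Integrable W Q) (hle : -W ≤ᵐ[Q] D) :
    Integrable D Q ∧ ∫ ω, D ω ∂Q = 0 := by
  obtain ⟨S, hS, hSmem, hSD⟩ := hD
  have hcover : AECover Q atTop S := ⟨ae_of_all Q hSmem, fun n => hm _ (hS n)⟩
  have hi (n : ℕ) : IntegrableOn D (S n) Q := (integrable_indicator_iff (hm _ (hS n))).1 (hSD n).1
  have hzero (n : ℕ) : ∫ ω in S n, D ω ∂Q = 0 := by
    rw [← integral_indicator (hm _ (hS n)), ← integral_condExp hm]
    exact integral_eq_zero_of_ae (hSD n).2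
  have hW2 : Integrable (fun ω => 2 * ‖W ω‖) Q := hW.norm.const_mul 2
  have hbound (n : ℕ) : ∫ ω in S n, ‖D ω‖ ∂Q ≤ ∫ ω, 2 * ‖W ω‖ ∂Q := by
    calc ∫ ω in S n, ‖D ω‖ ∂Q ≤ ∫ ω in S n, (D ω + 2 * ‖W ω‖) ∂Q := by
          refine integral_mono_ae (hi n).norm ((hi n).add hW2.integrableOn) ?_
          filter_upwards [ae_restrict_of_ae hle] with ω (h : -W ω ≤ D ω)
          have hWω := Real.le_norm_self (W ω)
          have hWω0 := norm_nonneg (W ω)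
          exact abs_le.2 ⟨by linarith, by linarith⟩
      _ = ∫ ω in S n, 2 * ‖W ω‖ ∂Q := by
          rw [integral_add (hi n) hW2.integrableOn, hzero, zero_add]
      _ ≤ ∫ ω, 2 * ‖W ω‖ ∂Q := setIntegral_le_integral hW2 (ae_of_all Q fun ω => by positivity)
  have hDi : Integrable D Q :=
    hcover.integrable_of_integral_norm_bounded _ hi (.of_forall hbound)
  refine ⟨hDi, tendsto_nhds_unique (hcover.integral_tendsto_of_countably_generated hDi) ?_⟩
  simp [hzero]

/-- The filtration is traversed backwards: if the first `T + 1` terms add up to at least `-W`, then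
the first `T` add up to at least `-Q[W | F T]`. -/
theorem integrable_and_integral_sum_eq_zero [IsFiniteMeasure Q] {F : ℕ → MeasurableSpace Ω}
    (hFmono : Monotone F) (hFle : ∀ t, F t ≤ m0) {T : ℕ} {D : ℕ → Ω → ℝ}
    (hDm : ∀ s < T, Measurable[F (s + 1)] (D s)) (hD : ∀ s < T, IsLocallyCentered Q (F s) (D s))
    (hW : Integrable W Q) (hle : -W ≤ᵐ[Q] ∑ s ∈ Finset.range T, D s) :
    Integrable (∑ s ∈ Finset.range T, D s) Q ∧ ∫ ω, (∑ s ∈ Finset.range T, D s) ω ∂Q = 0 := by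
  induction T generalizing W with
  | zero => simp
  | succ T ih =>
    rw [Finset.sum_range_succ] at hle ⊢
    have hVm : Measurable[F T] (∑ s ∈ Finset.range T, D s) := by
      rw [Finset.sum_fn]
      exact Finset.measurable_sum _ fun s hs =>
        (hDm s ((Finset.mem_range.1 hs).trans T.lt_succ_self)).mono
          (hFmono (Finset.mem_range.1 hs)) le_rfl
    have hDT : IsLocallyCentered Q (F T) (D T) := hD T T.lt_succ_self
    obtain ⟨hVi, hV0⟩ := ih (fun s hs => hDm s (hs.trans T.lt_succ_self))
      (fun s hs => hD s (hs.trans T.lt_succ_self)) integrable_condExp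
      (hDT.neg_condExp_le (hFle T) hVm hW hle)
    obtain ⟨hDi, hD0⟩ := hDT.integrable_and_integral_eq_zero (hFle T) (hW.add hVi) (by
      filter_upwards [hle] with ω h
      simp only [Pi.neg_apply, Pi.add_apply] at h ⊢
      linarith)
    exact ⟨hVi.add hDi, (integral_add hVi hDi).trans (by rw [hV0, hD0, add_zero])⟩

end LocallyCentered

section Gains

variable {J T : ℕ} {m0 : MeasurableSpace Ω} {F : ℕ → MeasurableSpace Ω} {A : Finset (Fin J)}
  {X : Fin J → ℕ → Ω → ℝ} {P Q : Measure Ω}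

/-- The set `K_i` of terminal gains as a linear space of random variables. -/
def gains (F : ℕ → MeasurableSpace Ω) (T : ℕ) (A : Finset (Fin J)) (X : Fin J → ℕ → Ω → ℝ) :
    Submodule ℝ (Ω → ℝ) where
  carrier := gainsSet F T A X
  zero_mem' := ⟨0, fun _ _ _ _ _ => measurable_const, by ext; simp⟩
  add_mem' := by
    rintro _ _ ⟨H, hH, rfl⟩ ⟨H', hH', rfl⟩
    refine ⟨H + H', fun j hj s h1 hsT => (hH j hj s h1 hsT).add (hH' j hj s h1 hsT), ?_⟩
    ext ω
    simp [Finset.sum_add_distrib, add_mul]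
  smul_mem' := by
    rintro c _ ⟨H, hH, rfl⟩
    refine ⟨c • H, fun j hj s h1 hsT => (hH j hj s h1 hsT).const_smul c, ?_⟩
    ext ω
    simp [Finset.mul_sum, mul_assoc]

theorem measurable_of_mem_gains (hFmono : Monotone F)
    (hX : ∀ j ∈ A, ∀ t, t ≤ T → Measurable[F t] (X j t)) {g : Ω → ℝ} (hg : g ∈ gains F T A X) :
    Measurable[F T] g := by
  obtain ⟨H, hH, rfl⟩ := hg
  refine Finset.measurable_sum _ fun j hj => Finset.measurable_sum _ fun s hs => ?_
  obtain ⟨h1, hsT⟩ := Finset.mem_Icc.1 hs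
  have hs' : s - 1 ≤ T := (Nat.sub_le s 1).trans hsT
  exact ((hH j hj s h1 hsT).mono (hFmono hs') le_rfl).mul
    (((hX j hj s hsT).mono (hFmono hsT) le_rfl).sub
      ((hX j hj _ hs').mono (hFmono hs') le_rfl))

theorem sum_Icc_ite_mul_sub_eq {s t : ℕ} (hst : s ≤ t) (htT : t ≤ T) (c : ℝ) (x : ℕ → ℝ) :
    ∑ u ∈ Finset.Icc 1 T, (if s < u ∧ u ≤ t then c else 0) * (x u - x (u - 1)) =
      c * (x t - x s) := by
  have hfilter : {u ∈ Finset.Icc 1 T | s < u ∧ u ≤ t} = Finset.Ico (s + 1) (t + 1) := by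
    ext u
    simp only [Finset.mem_filter, Finset.mem_Icc, Finset.mem_Ico]
    omega
  simp_rw [ite_mul, zero_mul]
  rw [← Finset.sum_filter, hfilter, ← Finset.mul_sum, ← Finset.sum_Ico_add' _ s t 1]
  simp [Finset.sum_Ico_sub x hst]

theorem indicator_sub_mem_gains (hFmono : Monotone F) (X : Fin J → ℕ → Ω → ℝ) {j : Fin J}
    (hj : j ∈ A) {s t : ℕ} (hst : s ≤ t) (htT : t ≤ T) {B : Set Ω} (hB : MeasurableSet[F s] B) :
    B.indicator (X j t - X j s) ∈ gains F T A X := by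
  refine ⟨fun j' u => if j' = j then if s < u ∧ u ≤ t then B.indicator 1 else 0 else 0,
    fun j' _ u _ _ => ?_, ?_⟩
  · beta_reduce
    split_ifs with hj' hu
    · exact (measurable_const.indicator hB : Measurable[F s] _).mono
        (hFmono (Nat.le_sub_one_of_lt hu.1)) le_rfl
    all_goals exact measurable_const
  · ext ω
    rw [Finset.sum_eq_single_of_mem j hj fun j' _ hne => by simp [hne]]
    simp only [if_true, ite_apply, Pi.zero_apply]
    rw [sum_Icc_ite_mul_sub_eq hst htT (B.indicator 1 ω) fun u => X j u ω]
    by_cases hω : ω ∈ B <;> simp [hω]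

theorem integrable_and_integral_eq_zero_of_mem_gains (hFmono : Monotone F)
    (hFle : ∀ t, F t ≤ m0) (hX : ∀ j ∈ A, ∀ t, t ≤ T → Measurable[F t] (X j t))
    (hQ : Q ∈ martMeasures P F T A X) {g W : Ω → ℝ} (hg : g ∈ gains F T A X)
    (hW : Integrable W Q) (hle : -W ≤ᵐ[Q] g) : Integrable g Q ∧ ∫ ω, g ω ∂Q = 0 := by
  obtain ⟨_, -, -, hmart⟩ := hQ
  obtain ⟨H, hH, rfl⟩ := hg
  have heq : (fun ω => ∑ j ∈ A, ∑ s ∈ Finset.Icc 1 T, H j s ω * (X j s ω - X j (s - 1) ω)) =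
      ∑ s ∈ Finset.range T, ∑ j ∈ A, H j (s + 1) * (X j (s + 1) - X j s) := by
    ext ω
    rw [Finset.sum_comm, Finset.range_eq_Ico, ← Finset.Ico_add_one_right_eq_Icc,
      ← Finset.sum_Ico_add' _ 0 T 1]
    simp
  have hH' (s : ℕ) (hs : s < T) (j : Fin J) (hj : j ∈ A) : Measurable[F s] (H j (s + 1)) :=
    hH j hj (s + 1) (Nat.le_add_left 1 s) hs
  rw [heq] at hle ⊢
  refine integrable_and_integral_sum_eq_zero hFmono hFle (fun s hs => ?_) (fun s hs => ?_) hW hle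
  · rw [Finset.sum_fn]
    exact Finset.measurable_sum _ fun j hj => ((hH' s hs j hj).mono (hFmono s.le_succ) le_rfl).mul
      ((hX j hj (s + 1) hs).sub ((hX j hj s hs.le).mono (hFmono s.le_succ) le_rfl))
  · exact isLocallyCentered_sum_mul_sub (hFle s) (hH' s hs) (fun j hj => (hmart j hj).1 s hs.le)
      (fun j hj => (hmart j hj).1 (s + 1) hs) fun j hj =>
        ((hmart j hj).2 s (s + 1) s.le_succ hs).symm.trans ((hmart j hj).2 s s le_rfl hs.le)

theorem mem_martMeasures_of_forall_integral_indicator_sub_eq_zero [IsProbabilityMeasure Q]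
    (hQP : Q ≪ P) (hPQ : P ≪ Q) (hFle : ∀ t, F t ≤ m0)
    (hX : ∀ j ∈ A, ∀ t, t ≤ T → Measurable[F t] (X j t))
    (hXi : ∀ j ∈ A, ∀ t, t ≤ T → Integrable (X j t) Q)
    (hzero : ∀ j ∈ A, ∀ s t, s ≤ t → t ≤ T → ∀ B, MeasurableSet[F s] B →
      ∫ ω, B.indicator (X j t - X j s) ω ∂Q = 0) :
    Q ∈ martMeasures P F T A X := by
  refine ⟨inferInstance, hQP, hPQ, fun j hj => ⟨hXi j hj, fun s t hst htT => ?_⟩⟩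
  have hs := hXi j hj s (hst.trans htT)
  have ht := hXi j hj t htT
  refine ae_eq_condExp_of_forall_setIntegral_eq (hFle s) ht (fun _ _ _ => hs.integrableOn)
    (fun B hB _ => ?_) (hX j hj s (hst.trans htT)).stronglyMeasurable.aestronglyMeasurable
  have h := hzero j hj s t hst htT B hB
  rw [integral_indicator (hFle s _ hB), integral_sub' ht.integrableOn hs.integrableOn] at h
  linarith

end Gains

section FundamentalTheorem

variable {J N T : ℕ} {m0 : MeasurableSpace Ω} {P : Measure Ω} {F : Fin N → ℕ → MeasurableSpace Ω}
  {X : Fin J → ℕ → Ω → ℝ} {assets : Fin N → Finset (Fin J)}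

theorem nca_of_nonempty_meY {𝒴 : Set (Fin N → Ω → ℝ)} (hFmono : ∀ i, Monotone (F i))
    (hFle : ∀ i t, F i t ≤ m0)
    (hadapted : ∀ i, ∀ j ∈ assets i, ∀ t, t ≤ T → Measurable[F i t] (X j t))
    (hQ : (MeY P F T assets X 𝒴).Nonempty) :
    NCA P (fun i => gainsSet (F i) T (assets i) X) 𝒴 := by
  obtain ⟨Q, hQ, hQi, hQY⟩ := hQ
  intro k y hy hk hnn i
  have hgain (i : Fin N) : Integrable (k i) (Q i) ∧ ∫ ω, k i ω ∂Q i = 0 :=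
    integrable_and_integral_eq_zero_of_mem_gains (hFmono i) (hFle i) (hadapted i) (hQ i) (hk i)
      (hQi y hy i) (by
        filter_upwards [(hQ i).2.1.ae_le (hnn i)] with ω h using neg_le_iff_add_nonneg.2 h)
  have hnnQ (i : Fin N) : 0 ≤ᵐ[Q i] fun ω => k i ω + y i ω := (hQ i).2.1.ae_le (hnn i)
  have hint0 (i : Fin N) : 0 ≤ ∫ ω, k i ω + y i ω ∂Q i := integral_nonneg_of_ae (hnnQ i)
  have hsum : ∑ i, ∫ ω, k i ω + y i ω ∂Q i ≤ 0 := by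
    simpa only [integral_add (hgain _).1 (hQi y hy _), (hgain _).2, zero_add] using hQY y hy
  have hzero : ∫ ω, k i ω + y i ω ∂Q i = 0 :=
    (Finset.sum_eq_zero_iff_of_nonneg fun i _ => hint0 i).1
      (le_antisymm hsum (Finset.sum_nonneg fun i _ => hint0 i)) i (Finset.mem_univ i)
  exact (hQ i).2.2.1.ae_le ((integral_eq_zero_iff_of_nonneg_ae (hnnQ i)
    ((hgain i).1.add (hQi y hy i))).1 hzero)

theorem NCA.nonempty_meY {μ : Measure Ω} [IsFiniteMeasure μ] [NeZero μ]
    {Y : PointedCone ℝ (Fin N → Ω → ℝ)}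
    (hNCA : NCA P (fun i => gainsSet (F i) T (assets i) X) Y)
    (hclosed : ClosedAS P (fun i => F i T)
      (KY P (fun i => F i T) (fun i => gainsSet (F i) T (assets i) X) Y))
    (hFmono : ∀ i, Monotone (F i)) (hFle : ∀ i t, F i t ≤ m0)
    (hadapted : ∀ i, ∀ j ∈ assets i, ∀ t, t ≤ T → Measurable[F i t] (X j t))
    (hY : ∀ y ∈ Y, ∀ i, Measurable[F i T] (y i)) (hzero : zeroSum Ω N ⊆ Y)
    (hμP : μ ≪ P) (hPμ : P ≪ μ)
    (hXμ : ∀ i, ∀ j ∈ assets i, ∀ t, t ≤ T → Integrable (X j t) μ)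
    (hYμ : ∀ y ∈ Y, ∀ i, Integrable (y i) μ) : (MeY P F T assets X Y).Nonempty := by
  obtain ⟨Q, hQprob, hQμ, hμQ, hQ⟩ :=
    NCA.exists_isProbabilityMeasure_sum_integral_kyCone_nonpos
      (K := fun i => gains (F i) T (assets i) X) hNCA hclosed (fun i => hFle i T)
      (fun i _ => measurable_of_mem_gains (hFmono i) (hadapted i)) hY hzero hμP hPμ
  have hint {i : Fin N} {f : Ω → ℝ} (hf : Integrable f μ) : Integrable f (Q i) := by
    obtain ⟨c, hc, hle⟩ := hQμ i
    exact hf.of_measure_le_smul hc hle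
  have hQP (i : Fin N) : Q i ≪ P := by
    obtain ⟨c, -, hle⟩ := hQμ i
    exact (Measure.absolutelyContinuous_of_le_smul hle).trans hμP
  refine ⟨Q, fun i => ?_, fun y hy i => hint (hYμ y hy i),
    fun y hy => hQ y (le_kyCone hy) (hYμ y hy)⟩
  refine mem_martMeasures_of_forall_integral_indicator_sub_eq_zero (hQP i) (hPμ.trans (hμQ i))
    (hFle i) (hadapted i) (fun j hj t ht => hint (hXμ i j hj t ht)) fun j hj s t hst htT B hB => ?_
  exact integral_eq_zero_of_sum_integral_kyCone_nonpos hQ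
    (indicator_sub_mem_gains (hFmono i) X hj hst htT hB)
    (((hXμ i j hj t htT).sub (hXμ i j hj s (hst.trans htT))).indicator (hFle i s _ hB))

theorem exists_le_forall_integrable_of_adapted (μ : Measure Ω) [IsFiniteMeasure μ]
    (hFle : ∀ i t, F i t ≤ m0)
    (hadapted : ∀ i, ∀ j ∈ assets i, ∀ t, t ≤ T → Measurable[F i t] (X j t)) :
    ∃ ν ≤ μ, μ ≪ ν ∧ ∀ i, ∀ j ∈ assets i, ∀ t, t ≤ T → Integrable (X j t) ν := by
  obtain ⟨ν, hle, hac, hν⟩ := exists_le_forall_integrable μ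
    (Finset.univ.biUnion assets ×ˢ Finset.range (T + 1)) (X := fun p => X p.1 p.2)
    fun p hp => by
      obtain ⟨hj, ht⟩ := Finset.mem_product.1 hp
      obtain ⟨i, -, hi⟩ := Finset.mem_biUnion.1 hj
      exact ((hadapted i _ hi _ (Finset.mem_range_succ_iff.1 ht)).mono (hFle i _)
        le_rfl).aestronglyMeasurable
  exact ⟨ν, hle, hac, fun i j hj t ht => hν (j, t) (Finset.mem_product.2
    ⟨Finset.mem_biUnion.2 ⟨i, Finset.mem_univ i, hj⟩, Finset.mem_range_succ_iff.2 ht⟩)⟩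

theorem collective_FTAP_I_general (hFmono : ∀ i, Monotone (F i)) (hFle : ∀ i t, F i t ≤ m0)
    (hadapted : ∀ i, ∀ j ∈ assets i, ∀ t, t ≤ T → Measurable[F i t] (X j t))
    {𝒴 : Set (Fin N → Ω → ℝ)}
    (h𝒴meas : ∀ y ∈ 𝒴, ∀ i, Measurable[F i T] (y i))
    (h𝒴R0 : zeroSum Ω N ⊆ 𝒴)
    (h𝒴add : ∀ y ∈ 𝒴, ∀ z ∈ 𝒴, (fun i ω => y i ω + z i ω) ∈ 𝒴)
    (h𝒴cone : ∀ y ∈ 𝒴, ∀ c : ℝ, 0 ≤ c → (fun i ω => c * y i ω) ∈ 𝒴)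
    (hclosed : ClosedAS P (fun i => F i T)
      (KY P (fun i => F i T) (fun i => gainsSet (F i) T (assets i) X) 𝒴))
    {P' : Measure Ω} [IsProbabilityMeasure P'] (hP'equiv : P' ≪ P ∧ P ≪ P')
    (h𝒴int : ∀ y ∈ 𝒴, ∀ i, Integrable (y i) P') :
    NCA P (fun i => gainsSet (F i) T (assets i) X) 𝒴 ↔ (MeY P F T assets X 𝒴).Nonempty := by
  refine ⟨fun hNCA => ?_, nca_of_nonempty_meY hFmono hFle hadapted⟩
  let Y : PointedCone ℝ (Fin N → Ω → ℝ) :=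
    { carrier := 𝒴
      zero_mem' := h𝒴R0 ⟨0, by simp, fun _ => rfl⟩
      add_mem' := fun hy hz => h𝒴add _ hy _ hz
      smul_mem' := fun c _ hy => h𝒴cone _ hy c c.2 }
  obtain ⟨μ, hle, hP'μ, hXμ⟩ := exists_le_forall_integrable_of_adapted P' hFle hadapted
  have : IsFiniteMeasure μ := isFiniteMeasure_of_le P' hle
  have : NeZero μ :=
    ⟨fun h => IsProbabilityMeasure.ne_zero P' (Measure.absolutelyContinuous_zero_iff.1 (h ▸ hP'μ))⟩
  exact NCA.nonempty_meY (Y := Y) hNCA hclosed hFmono hFle hadapted h𝒴meas h𝒴R0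
    ((Measure.absolutelyContinuous_of_le hle).trans hP'equiv.1) (hP'equiv.2.trans hP'μ) hXμ
    fun y hy i => (h𝒴int y hy i).mono_measure hle

end FundamentalTheorem

/-- collective FTAP I (Theorem Th1). -/
theorem collective_FTAP_I
    {Ω : Type*} [m0 : MeasurableSpace Ω]
    (P : Measure Ω) [IsProbabilityMeasure P]
    (T J N : ℕ) (hT : 1 ≤ T) (hJ : 1 ≤ J) (hN : 1 ≤ N)
    (F : Fin N → ℕ → MeasurableSpace Ω)
    (hFmono : ∀ i, Monotone (F i))
    (hFle : ∀ i t, F i t ≤ m0)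
    (hFzero : ∀ i, ∀ A : Set Ω, MeasurableSet[F i 0] A → P A = 0 ∨ P A = 1)
    (X : Fin J → ℕ → Ω → ℝ)
    (assets : Fin N → Finset (Fin J))
    (hassets : ∀ i, (assets i).Nonempty)
    (hcover : ∀ j, ∃ i, j ∈ assets i)
    (hadapted : ∀ i, ∀ j ∈ assets i, ∀ t, t ≤ T → Measurable[F i t] (X j t))
    (𝒴 : Set (Fin N → Ω → ℝ))
    (h𝒴meas : ∀ y ∈ 𝒴, ∀ i, Measurable[F i T] (y i))
    (h𝒴R0 : zeroSum Ω N ⊆ 𝒴)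
    (h𝒴add : ∀ y ∈ 𝒴, ∀ z ∈ 𝒴, (fun i ω => y i ω + z i ω) ∈ 𝒴)
    (h𝒴cone : ∀ y ∈ 𝒴, ∀ c : ℝ, 0 ≤ c → (fun i ω => c * y i ω) ∈ 𝒴)
    (hclosed : ClosedAS P (fun i => F i T)
      (KY P (fun i => F i T) (fun i => gainsSet (F i) T (assets i) X) 𝒴))
    (P' : Measure Ω) (hP'prob : IsProbabilityMeasure P')
    (hP'equiv : P' ≪ P ∧ P ≪ P')
    (h𝒴int : ∀ y ∈ 𝒴, ∀ i, Integrable (y i) P') :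
    NCA P (fun i => gainsSet (F i) T (assets i) X) 𝒴 ↔
      (MeY P F T assets X 𝒴).Nonempty :=
  collective_FTAP_I_general hFmono hFle hadapted h𝒴meas h𝒴R0 h𝒴add h𝒴cone hclosed hP'equiv
    h𝒴int

end CollectiveArb
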